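/- arXiv:1505.07600 — 6 statements merged into one kernel-verified Lean document; each statement's English description precedes it below -/
import Mathlib

section
/- Define C : ℝ → ℝ by C(z) = (1 + z − √(z² − 6z + 1))/4. Then for every z with 0 ≤ z ≤ 3 − 2√2, one has 0 ≤ C(z) < 1 and C(z) = z + C(z)²/(1 − C(z)). -/
/-!
Clearing the denominator `1 - C` turns the functional equation into the quadratic
`2 * C ^ 2 - (1 + z) * C + z = 0`, whose discriminant in `C` is
`(1 + z) ^ 2 - 8 * z = z ^ 2 - 6 * z + 1`. For `0 ≤ z ≤ 3 - 2√2` this discriminant is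
nonnegative and its square root `r` satisfies `0 ≤ r ≤ 1 + z`, so `C(z) = (1 + z - r) / 4`
is a real root with `0 ≤ C(z) ≤ (1 + z) / 4 < 1`.
-/

/-- The generating function `C(z) = (1 + z - √(z² - 6z + 1))/4` of non-separable simple
outerplanar maps satisfies `0 ≤ C(z) < 1` and the functional equation
`C(z) = z + C(z)²/(1 - C(z))` on `[0, 3 - 2√2]`. -/
theorem outerplanar_gf_functional_equation
    (C : ℝ → ℝ)
    (hC : ∀ z : ℝ, C z = (1 + z - Real.sqrt (z ^ 2 - 6 * z + 1)) / 4) :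
    ∀ z : ℝ, 0 ≤ z → z ≤ 3 - 2 * Real.sqrt 2 →
      0 ≤ C z ∧ C z < 1 ∧ C z = z + (C z) ^ 2 / (1 - C z) := by
  intro z hz0 hz
  have hs : Real.sqrt 2 ^ 2 = 2 := Real.sq_sqrt (by norm_num)
  have hs0 : 0 ≤ Real.sqrt 2 := Real.sqrt_nonneg 2
  have hs1 : 1 ≤ Real.sqrt 2 := by nlinarith
  -- `z ^ 2 - 6 * z + 1` factors with roots `3 ± 2√2`, and `z` lies below both of them.
  have hD : 0 ≤ z ^ 2 - 6 * z + 1 := by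
    have h := mul_nonneg (sub_nonneg.2 hz)
      (show 0 ≤ 3 + 2 * Real.sqrt 2 - z by linarith)
    nlinarith
  have hr := Real.sq_sqrt hD
  have hr0 := Real.sqrt_nonneg (z ^ 2 - 6 * z + 1)
  rw [hC z]
  set r := Real.sqrt (z ^ 2 - 6 * z + 1)
  -- `(1 + z) ^ 2 - r ^ 2 = 8 * z ≥ 0`
  have hr1 : r ≤ 1 + z := abs_le_of_sq_le_sq' (by nlinarith) (by linarith) |>.2
  have hlt : (1 + z - r) / 4 < 1 := by linarith
  refine ⟨by linarith, hlt, ?_⟩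
  have hne : 1 - (1 + z - r) / 4 ≠ 0 := by linarith
  -- Clearing the denominator leaves `2 * C ^ 2 - (1 + z) * C + z = 0`,
  -- whose discriminant is `r ^ 2`.
  rw [← sub_eq_iff_eq_add', eq_div_iff hne]
  nlinarith
end

section
/- Define C : ℝ → ℝ by C(z) = (1 + z − √(z² − 6z + 1))/4 and ψ : ℝ → ℝ by ψ(z) = z·C′(z)/(1 − C(z)), where C′ denotes the derivative of C. Then (1/6)·ψ′(1/6) = 18. -/
/-! The radicand `z² - 6z + 1` takes the value `(1/6)²` at `1/6`, so `C` is smooth near `1/6` and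
everything is rational there: `C = 1/4`, `C' = 9/2`, `C'' = 432`. The quotient rule gives
`ψ' = C'/(1 - C) + z·C''/(1 - C) + z·C'²/(1 - C)² = 6 + 96 + 6 = 108` at `1/6`. -/

/-- With `C(z) = (1 + z - √(z² - 6z + 1))/4` and `ψ(z) = z·C'(z)/(1 - C(z))`, one has
`(1/6)·ψ'(1/6) = 18`, the offspring variance for uniform rooted simple outerplanar maps. -/
theorem outerplanar_offspring_variance
    (C ψ : ℝ → ℝ)
    (hC : ∀ z : ℝ, C z = (1 + z - Real.sqrt (z ^ 2 - 6 * z + 1)) / 4)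
    (hψ : ∀ z : ℝ, ψ z = z * deriv C z / (1 - C z)) :
    (1 / 6 : ℝ) * deriv ψ (1 / 6) = 18 := by
  have hR (z : ℝ) : HasDerivAt (fun z : ℝ => z ^ 2 - 6 * z + 1) (2 * z - 6) z := by
    have h := (((hasDerivAt_id z).pow 2).sub ((hasDerivAt_id z).const_mul 6)).add_const 1
    refine h.congr_deriv ?_
    simp
  have hC' (z : ℝ) (hz : 0 < z ^ 2 - 6 * z + 1) :
      HasDerivAt C ((1 - (2 * z - 6) / (2 * √(z ^ 2 - 6 * z + 1))) / 4) z := by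
    rw [funext hC]
    exact (((hasDerivAt_id z).const_add 1).sub ((hR z).sqrt hz.ne')).div_const 4
  -- The radicand is `1/36` at `1/6`, hence positive nearby, so there `deriv C` is not a junk value
  -- and can be differentiated through its closed form.
  have hpos : (0 : ℝ) < (1 / 6) ^ 2 - 6 * (1 / 6) + 1 := by norm_num
  have hev : deriv C =ᶠ[nhds (1 / 6)]
      fun z => (1 - (2 * z - 6) / (2 * √(z ^ 2 - 6 * z + 1))) / 4 := by
    filter_upwards [(hR (1 / 6)).continuousAt.eventually (lt_mem_nhds hpos)] with z hz
    exact (hC' z hz).deriv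
  have hs : √((1 / 6 : ℝ) ^ 2 - 6 * (1 / 6) + 1) = 1 / 6 := by
    rw [show (1 / 6 : ℝ) ^ 2 - 6 * (1 / 6) + 1 = (1 / 6) ^ 2 by norm_num]
    exact Real.sqrt_sq (by norm_num)
  have hCv : C (1 / 6) = 1 / 4 := by rw [hC, hs]; norm_num
  have hC1 : HasDerivAt C (9 / 2) (1 / 6) := by
    refine (hC' _ hpos).congr_deriv ?_
    rw [hs]; norm_num
  have hC2 : HasDerivAt (deriv C) 432 (1 / 6) := by
    refine HasDerivAt.congr_of_eventuallyEq ?_ hev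
    have hnum : HasDerivAt (fun z : ℝ => 2 * z - 6) (2 * 1) (1 / 6) :=
      ((hasDerivAt_id _).const_mul 2).sub_const 6
    have hden := ((hR (1 / 6)).sqrt hpos.ne').const_mul 2
    have h := ((hnum.div hden (by rw [hs]; norm_num)).const_sub 1).div_const 4
    refine h.congr_deriv ?_
    rw [hs]; norm_num
  have hψ' : HasDerivAt ψ 108 (1 / 6) := by
    rw [funext hψ]
    have h := ((hasDerivAt_id (1 / 6 : ℝ)).mul hC2).div (hC1.const_sub 1)
      (by rw [hCv]; norm_num)
    refine h.congr_deriv ?_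
    simp only [Pi.mul_apply, id, hCv, hC1.deriv]
    norm_num
  rw [hψ'.deriv]; norm_num
end

section
/- Let τ = (4/3)√3 − 2 and w = (√3 − 1)/2. Suppose C : ℝ → ℝ is differentiable at τ, C(τ) = w, and there is a neighborhood U of τ such that 2·C(z)³ − z·C(z)² − C(z) + z = 0 for all z ∈ U. Then τ·C′(τ) = 1 − w; equivalently, τ·C′(τ)/(1 − C(τ)) = 1. -/
/-!
Differentiating `2C³ - zC² - C + z = 0` at `τ` gives the linear equation
`(6w² - 2τw - 1) C'(τ) = w² - 1`. The number `w = (√3 - 1)/2` satisfies `2w² + 2w = 1`, and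
`τ = (8w - 2)/3`, so the coefficient of `C'(τ)` reduces to `-(2/3)(1 - w)`. Since `w ≠ 1`, dividing
gives `C'(τ) = (3/2)(1 + w)`, whence `τ C'(τ) = (4w - 1)(1 + w) = 1 - w`.
-/

/-- If `C` is differentiable at `τ = (4/3)√3 - 2` with `C(τ) = (√3 - 1)/2` and satisfies
the bipartite functional equation `2C³ - zC² - C + z = 0` near `τ`, then
`τ·C'(τ) = 1 - w`, equivalently `τ·C'(τ)/(1 - C(τ)) = 1`. -/
theorem bipartite_critical_equation
    (τ w : ℝ) (hτ : τ = (4 / 3) * Real.sqrt 3 - 2) (hw : w = (Real.sqrt 3 - 1) / 2)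
    (C : ℝ → ℝ) (hdiff : DifferentiableAt ℝ C τ) (hCτ : C τ = w)
    (hfe : ∃ U ∈ nhds τ, ∀ z ∈ U, 2 * C z ^ 3 - z * C z ^ 2 - C z + z = 0) :
    τ * deriv C τ = 1 - w ∧ τ * deriv C τ / (1 - C τ) = 1 := by
  obtain ⟨U, hU, hz⟩ := hfe
  have hs : Real.sqrt 3 ^ 2 = 3 := Real.sq_sqrt (by norm_num)
  have hw2 : 2 * w ^ 2 + 2 * w = 1 := by rw [hw]; linear_combination hs / 2
  have hτw : τ = (8 * w - 2) / 3 := by rw [hτ, hw]; ring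
  -- `w = 1` would contradict `2w² + 2w = 1`.
  have hne : 1 - w ≠ 0 := by
    intro h
    have h1 : w = 1 := by linarith
    rw [h1] at hw2
    norm_num at hw2
  have hC := hdiff.hasDerivAt
  have hF := ((((hC.pow 3).const_mul 2).sub ((hasDerivAt_id τ).mul (hC.pow 2))).sub hC).add
    (hasDerivAt_id τ)
  have h0 : HasDerivAt (fun _ : ℝ => (0 : ℝ)) _ τ := hF.congr_of_eventuallyEq (by
    filter_upwards [hU] with z hzU
    simpa using (hz z hzU).symm)
  have hlin := h0.unique (hasDerivAt_const τ (0 : ℝ))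
  simp only [hCτ, id, Pi.pow_apply] at hlin
  norm_num at hlin
  generalize deriv C τ = D at *
  have hD : D = 3 / 2 * (1 + w) := by
    apply mul_left_cancel₀ hne
    rw [hτw] at hlin
    linear_combination (-3 / 2) * hlin + (D / 2) * hw2
  have hmain : τ * D = 1 - w := by
    rw [hD, hτw]
    linear_combination 2 * hw2
  exact ⟨hmain, by rw [hmain, hCτ, div_self hne]⟩
end

section
/- Let τ = (4/3)√3 − 2 and w = (√3 − 1)/2. Suppose C : ℝ → ℝ is twice continuously differentiable on a neighborhood U of τ, C(τ) = w, and 2·C(z)³ − z·C(z)² − C(z) + z = 0 for all z ∈ U. Define ψ(z) = z·C′(z)/(1 − C(z)) for z ∈ U. Then τ·ψ′(τ) = 9(√3 − 1). -/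
/-!
Write `P(z, C) = 2C³ - zC² - C + z`. Differentiating `P(z, C(z)) = 0` once and twice at `τ` gives
linear equations for `C'(τ)` and `C''(τ)`, both with leading coefficient
`∂P/∂C (τ, w) = √3/3 - 1 ≠ 0`. Solving them yields `C'(τ) = 3(√3 + 1)/4` and
`C''(τ) = (39√3 + 54)/4`, and the quotient rule turns these into the value of `τ ψ'(τ)`.
-/

/-- If `C` is twice continuously differentiable near `τ = (4/3)√3 - 2` with
`C(τ) = (√3 - 1)/2` and satisfies `2C³ - zC² - C + z = 0` near `τ`, then for
`ψ(z) = z·C'(z)/(1 - C(z))` one has `τ·ψ'(τ) = 9(√3 - 1)`. -/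
theorem bipartite_offspring_variance
    (τ w : ℝ) (hτ : τ = (4 / 3) * Real.sqrt 3 - 2) (hw : w = (Real.sqrt 3 - 1) / 2)
    (C : ℝ → ℝ) (U : Set ℝ) (hU : U ∈ nhds τ)
    (hC2 : ContDiffOn ℝ 2 C U) (hCτ : C τ = w)
    (hfe : ∀ z ∈ U, 2 * C z ^ 3 - z * C z ^ 2 - C z + z = 0) :
    τ * deriv (fun z => z * deriv C z / (1 - C z)) τ = 9 * (Real.sqrt 3 - 1) := by
  have hU' : ∀ᶠ z in nhds τ, U ∈ nhds z := eventually_mem_nhds_iff.2 hU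
  have hd : ∀ z, U ∈ nhds z → HasDerivAt C (deriv C z) z := fun z hz =>
    ((hC2.contDiffAt hz).differentiableAt (by norm_num)).hasDerivAt
  -- The functional equation differentiated once, valid on a whole neighborhood of `τ`.
  have h1 : ∀ z, U ∈ nhds z →
      6 * C z ^ 2 * deriv C z - C z ^ 2 - 2 * z * C z * deriv C z - deriv C z + 1 = 0 := by
    intro z hz
    have hc := hd z hz
    have hF := ((((hc.pow 3).const_mul 2).sub ((hasDerivAt_id z).mul (hc.pow 2))).sub hc).add
      (hasDerivAt_id z)
    have h0 := hF.congr_of_eventuallyEq (f₁ := fun _ => (0 : ℝ)) (by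
      filter_upwards [hz] with y hy
      simpa using (hfe y hy).symm)
    have := h0.unique (hasDerivAt_const z (0 : ℝ))
    simp at this
    linear_combination this
  have hc := hd τ hU
  have hc2 : HasDerivAt (deriv C) (deriv (deriv C) τ) τ := by
    have h : ContDiffAt ℝ 1 (deriv C) τ :=
      (hC2.contDiffAt hU).derivWithin (by norm_num [one_add_one_eq_two])
    exact (h.differentiableAt (by norm_num)).hasDerivAt
  have e1 := h1 τ hU
  have e2 : 12 * C τ * deriv C τ ^ 2 + 6 * C τ ^ 2 * deriv (deriv C) τ - 4 * C τ * deriv C τ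
      - 2 * τ * deriv C τ ^ 2 - 2 * τ * C τ * deriv (deriv C) τ - deriv (deriv C) τ = 0 := by
    have hF := ((((((hc.pow 2).const_mul 6).mul hc2).sub (hc.pow 2)).sub
      ((((hasDerivAt_id τ).const_mul 2).mul hc).mul hc2)).sub hc2).add_const 1
    have h0 := hF.congr_of_eventuallyEq (f₁ := fun _ => (0 : ℝ)) (by
      filter_upwards [hU'] with y hy
      simpa using (h1 y hy).symm)
    have := h0.unique (hasDerivAt_const τ (0 : ℝ))
    simp at this
    linear_combination this
  have hs : Real.sqrt 3 ^ 2 = 3 := Real.sq_sqrt (by norm_num)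
  have hs2 : Real.sqrt 3 < 2 := by
    rw [Real.sqrt_lt' (by norm_num)]; norm_num
  have hne : 1 - C τ ≠ 0 := by rw [hCτ, hw]; linarith
  have hψ := (((hasDerivAt_id τ).mul hc2).div (hc.const_sub 1) hne).deriv
  have hψ' : deriv (fun z => z * deriv C z / (1 - C z)) τ = _ := hψ
  rw [hψ']
  simp only [Pi.mul_apply, id]
  rw [hCτ] at e1 e2 hne ⊢
  generalize deriv (deriv C) τ = b at *
  generalize deriv C τ = a at *
  generalize Real.sqrt 3 = s at *
  subst hτ hw
  have hk : s / 3 - 1 ≠ 0 := by linarith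
  have ha : a = 3 * (s + 1) / 4 := by
    apply mul_left_cancel₀ hk
    linear_combination e1 - a / 6 * hs
  subst ha
  have hb : b = (39 * s + 54) / 4 := by
    apply mul_left_cancel₀ hk
    grind
  subst hb
  rw [mul_div_assoc', div_eq_iff (pow_ne_zero 2 hne)]
  grind
end

section
/- Let τ = (4/3)√3 − 2 and w = (√3 − 1)/2. Suppose C : ℝ → ℝ is twice continuously differentiable on a neighborhood U of τ, C(τ) = w, and 2·C(z)³ − z·C(z)² − C(z) + z = 0 for all z ∈ U. Define φ(z) = 1/(1 − C(z)) for z ∈ U. Then τ/φ(τ) = 3√3 − 5, i.e. τ·(1 − w) = 3√3 − 5, and √(φ(τ)/(2π·φ″(τ))) = (2√3 − 3)·√2/(9·√(π(√3 − 1))). -/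
/-!
Differentiating `2C³ - zC² - C + z = 0` once and twice at `τ` gives linear equations for `C'(τ)` and
`C''(τ)`, both with leading coefficient `6w² - 2τw - 1 = √3/3 - 1 ≠ 0`. They are solved by
`C'(τ) = 3(√3 + 1)/4` and `C''(τ) = (39√3 + 54)/4`. Since `φ'' = C''/(1 - C)² + 2C'²/(1 - C)³`, this
yields `φ''(τ) = (108 + 63√3)/2`, and the claims become identities in `ℚ(√3)`.
-/

open Filter Topology

/-- The equations obtained by differentiating `2C³ - zC² - C + z = 0` once and twice, together with
the second derivative of `1/(1 - C)`. -/
lemma implicit_derivatives {C φ : ℝ → ℝ} {τ : ℝ} (hC : ContDiffAt ℝ 2 C τ) (h1 : C τ ≠ 1)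
    (hfe : ∀ᶠ z in 𝓝 τ, 2 * C z ^ 3 - z * C z ^ 2 - C z + z = 0)
    (hφ : ∀ᶠ z in 𝓝 τ, φ z = 1 / (1 - C z)) :
    ∃ a b : ℝ,
      6 * C τ ^ 2 * a - C τ ^ 2 - 2 * τ * C τ * a - a + 1 = 0 ∧
      12 * C τ * a ^ 2 + 6 * C τ ^ 2 * b - 4 * C τ * a - 2 * τ * a ^ 2 - 2 * τ * C τ * b - b = 0 ∧
      deriv (deriv φ) τ = b / (1 - C τ) ^ 2 + 2 * a ^ 2 / (1 - C τ) ^ 3 := by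
  have hd : ∀ᶠ z in 𝓝 τ, HasDerivAt C (deriv C z) z := by
    filter_upwards [hC.eventually (by simp)] with z hz
    exact (hz.differentiableAt (by norm_num)).hasDerivAt
  have hdd : HasDerivAt (deriv C) (deriv (deriv C) τ) τ := by
    have h : ContDiffAt ℝ 1 (deriv C) τ := (hC.fderiv_right (m := 1) (by norm_num)).clm_apply contDiffAt_const
    exact (h.differentiableAt (by norm_num)).hasDerivAt
  have hne : ∀ᶠ z in 𝓝 τ, 1 - C z ≠ 0 :=
    (continuousAt_const.sub hC.continuousAt).eventually_ne (sub_ne_zero.mpr h1.symm)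
  have hC1 := hd.self_of_nhds
  have e1 : ∀ᶠ z in 𝓝 τ,
      6 * C z ^ 2 * deriv C z - C z ^ 2 - 2 * z * C z * deriv C z - deriv C z + 1 = 0 := by
    filter_upwards [hfe.eventually_nhds, hd] with z hz hCz
    have h := ((((hCz.pow 3).const_mul 2).sub ((hasDerivAt_id z).mul (hCz.pow 2))).sub hCz).add
      (hasDerivAt_id z)
    have h0 := h.unique ((hasDerivAt_const z (0 : ℝ)).congr_of_eventuallyEq hz)
    simp at h0
    linear_combination h0
  have eφ : ∀ᶠ z in 𝓝 τ, deriv φ z = deriv C z / (1 - C z) ^ 2 := by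
    filter_upwards [hφ.eventually_nhds, hd, hne] with z hz hCz hn
    have h := ((hCz.const_sub 1).inv hn).congr_of_eventuallyEq
      (f₁ := φ) (hz.mono fun y hy => by simpa using hy)
    simpa using h.deriv
  refine ⟨deriv C τ, deriv (deriv C) τ, e1.self_of_nhds, ?_, ?_⟩
  · have h := (((((((hC1.pow 2).const_mul 6).mul hdd).sub (hC1.pow 2)).sub
      ((((hasDerivAt_id τ).const_mul 2).mul hC1).mul hdd)).sub hdd).add_const 1)
    have h0 := h.unique ((hasDerivAt_const τ (0 : ℝ)).congr_of_eventuallyEq e1)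
    simp at h0
    linear_combination h0
  · have hn := hne.self_of_nhds
    have h := (hdd.div ((hC1.const_sub 1).pow 2) (pow_ne_zero 2 hn)).congr_of_eventuallyEq eφ
    rw [h.deriv]
    simp
    field_simp

/-- If `C` is twice continuously differentiable near `τ = (4/3)√3 - 2` with
`C(τ) = (√3 - 1)/2` and satisfies `2C³ - zC² - C + z = 0` near `τ`, then for
`φ(z) = 1/(1 - C(z))` one has `τ/φ(τ) = 3√3 - 5` (i.e. `τ(1 - w) = 3√3 - 5`) and
`√(φ(τ)/(2π·φ''(τ))) = (2√3 - 3)√2/(9√(π(√3 - 1)))`. -/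
theorem bipartite_enumeration_constants
    (τ w : ℝ) (hτ : τ = (4 / 3) * Real.sqrt 3 - 2) (hw : w = (Real.sqrt 3 - 1) / 2)
    (C φ : ℝ → ℝ) (U : Set ℝ) (hU : U ∈ nhds τ)
    (hC2 : ContDiffOn ℝ 2 C U) (hCτ : C τ = w)
    (hfe : ∀ z ∈ U, 2 * C z ^ 3 - z * C z ^ 2 - C z + z = 0)
    (hφ : ∀ z ∈ U, φ z = 1 / (1 - C z)) :
    τ / φ τ = 3 * Real.sqrt 3 - 5 ∧
    τ * (1 - w) = 3 * Real.sqrt 3 - 5 ∧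
    Real.sqrt (φ τ / (2 * Real.pi * deriv (deriv φ) τ)) =
      (2 * Real.sqrt 3 - 3) * Real.sqrt 2 /
        (9 * Real.sqrt (Real.pi * (Real.sqrt 3 - 1))) := by
  obtain ⟨s, hs⟩ : ∃ s, s = Real.sqrt 3 := ⟨_, rfl⟩
  have s2 : s ^ 2 = 3 := by rw [hs]; exact Real.sq_sqrt (by norm_num)
  have s0 : 0 ≤ s := hs ▸ Real.sqrt_nonneg 3
  have sl : 17 / 10 < s := by nlinarith
  have su : s < 18 / 10 := by nlinarith
  rw [← hs] at hτ hw ⊢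
  have hc : τ * (1 - w) = 3 * s - 5 := by
    rw [hτ, hw]; linear_combination (-2 / 3) * s2
  have hφτ : φ τ = 1 / (1 - w) := by rw [hφ τ (mem_of_mem_nhds hU), hCτ]
  refine ⟨by rw [hφτ, div_div_eq_mul_div, div_one, hc], hc, ?_⟩
  obtain ⟨a, b, ha, hb, hdd⟩ := implicit_derivatives (hC2.contDiffAt hU)
    (by rw [hCτ, hw]; intro h; linarith)
    (Filter.eventually_of_mem hU hfe) (Filter.eventually_of_mem hU hφ)
  rw [hCτ] at ha hb hdd
  have hL : 6 * w ^ 2 - 2 * τ * w - 1 = s / 3 - 1 := by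
    rw [hτ, hw]; linear_combination (1 / 6) * s2
  have hw2 : w ^ 2 = 1 - s / 2 := by rw [hw]; linear_combination (1 / 4) * s2
  have hLne : s / 3 - 1 ≠ 0 := by intro h; linarith
  have ha' : a = 3 * (s + 1) / 4 := by
    apply mul_left_cancel₀ hLne
    linear_combination ha + (-a) * hL + hw2 - (1 / 4) * s2
  have hb' : b = (39 * s + 54) / 4 := by
    apply mul_left_cancel₀ hLne
    have ha2 : a ^ 2 = 9 * (2 + s) / 8 := by rw [ha']; linear_combination (9 / 16) * s2
    have hwa : 4 * w * a = 3 := by rw [hw, ha']; linear_combination (3 / 2) * s2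
    have hk : a ^ 2 * (12 * w - 2 * τ) = (21 * s + 27) / 4 := by
      rw [ha2, hw, hτ]; linear_combination (15 / 4) * s2
    linear_combination hb - b * hL - hk + hwa - (13 / 4) * s2
  have hinv : 1 / (1 - w) = (3 + s) / 3 := by
    have : 1 - w ≠ 0 := by rw [hw]; intro h; linarith
    rw [div_eq_div_iff this (by norm_num), hw]
    linear_combination (1 / 2) * s2
  have hdd' : deriv (deriv φ) τ = (108 + 63 * s) / 2 := by
    have h : deriv (deriv φ) τ = b * (1 / (1 - w)) ^ 2 + 2 * a ^ 2 * (1 / (1 - w)) ^ 3 := by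
      rw [hdd]; simp [div_eq_mul_inv]
    have s3 : s ^ 3 = 3 * s := by linear_combination s * s2
    have s4 : s ^ 4 = 9 := by linear_combination (s ^ 2 + 3) * s2
    have s5 : s ^ 5 = 9 * s := by linear_combination s * s4
    rw [h, hinv, ha', hb']
    ring_nf
    rw [s2, s3, s4, s5]
    ring
  have hpi := Real.pi_pos
  have hs1 : 0 < s - 1 := by linarith
  rw [hdd', hφτ, hinv]
  rw [Real.sqrt_eq_iff_mul_self_eq_of_pos]
  · have q2 : Real.sqrt 2 ^ 2 = 2 := Real.sq_sqrt (by norm_num)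
    have qp : Real.sqrt (Real.pi * (s - 1)) ^ 2 = Real.pi * (s - 1) := Real.sq_sqrt (by positivity)
    rw [← pow_two, div_pow, mul_pow, mul_pow, q2, qp,
      div_eq_div_iff (by positivity) (by positivity)]
    have s3 : s ^ 3 = 3 * s := by linear_combination s * s2
    ring_nf
    rw [s3, s2]
    ring
  · have : 0 < 2 * s - 3 := by linarith
    positivity
end

section
/- Let w be a real number with 0 < w < 1 and 4w⁸ − 16w⁶ + 19w⁴ − 8w² + 1 ≠ 0. Suppose x, y ∈ ℝ satisfy the two equations: x = Σ w^{ℓ+r}·( [ℓ ≤ r]·(ℓ + x) + [ℓ ≥ r + 2]·(r + 1 + y) ) + (1 − w² − w³)/(1 − w²) and y = Σ w^{ℓ+r}·( [ℓ ≤ r − 2]·(ℓ + 1 + x) + [ℓ ≥ r]·(r + y) ), where both sums range over all pairs (ℓ, r) of non-negative integers with ℓ + r even and ℓ + r ≥ 2, and [·] denotes the indicator of the bracketed condition. Then x = (2w⁹ + 2w⁸ − 6w⁷ − 8w⁶ + 5w⁵ + 7w⁴ − w³ − 4w² + 1)/(4w⁸ − 16w⁶ + 19w⁴ − 8w² + 1).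 -/
/-!
Split the even pairs `(ℓ, r)` into those with `ℓ ≤ r`, which are exactly the `(i, i + 2k)`, and
those with `ℓ ≥ r + 2`, which are exactly the `(i + 2k + 2, i)` (roles of `ℓ`, `r` swapped for `y`). With `q = w²`, each half of either
series becomes, up to a factor `q` or the missing term at `(0, 0)`, the product series
`∑_{i,k} q^(i+k) (i + s) = (q / (1-q)² + s / (1-q)) / (1-q)`. The hypotheses therefore reduce to a
`2 × 2` linear system in `x` and `y` whose determinant is
`(4w⁸ - 16w⁶ + 19w⁴ - 8w² + 1) / (1-w²)⁴`, and Cramer's rule gives `x`.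
-/

theorem hasSum_pow_mul_add (q s : ℝ) (h0 : 0 < q) (h1 : q < 1) :
    HasSum (fun p : ℕ × ℕ => q ^ (p.1 + p.2) * ((p.1 : ℝ) + s))
      ((q / (1 - q) ^ 2 + s * (1 - q)⁻¹) * (1 - q)⁻¹) := by
  have hn : ‖q‖ < 1 := by rwa [Real.norm_of_nonneg h0.le]
  have hg := hasSum_geometric_of_lt_one h0.le h1
  have hf : HasSum (fun i : ℕ => (i : ℝ) * q ^ i + s * q ^ i)
      (q / (1 - q) ^ 2 + s * (1 - q)⁻¹) :=
    (hasSum_coe_mul_geometric_of_norm_lt_one hn).add (hg.mul_left s)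
  have hs := summable_mul_of_summable_norm hf.summable.norm hg.summable.norm
  refine (hf.mul hg hs).congr_fun fun p => ?_
  rw [pow_add]
  ring

/-- The half `ℓ ≤ r`, parametrised by `(i, k) ↦ (i, i + 2k)`; the condition `2 ≤ ℓ + r`
removes the term `s` at the origin. -/
theorem hasSum_low (w s : ℝ) (hw0 : 0 < w) (hw1 : w < 1) :
    HasSum (fun p : ℕ × ℕ => if Even (p.1 + p.2) ∧ 2 ≤ p.1 + p.2 ∧ p.1 ≤ p.2 then
        w ^ (p.1 + p.2) * ((p.1 : ℝ) + s) else 0)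
      ((w ^ 2 / (1 - w ^ 2) ^ 2 + s * (1 - w ^ 2)⁻¹) * (1 - w ^ 2)⁻¹ - s) := by
  have hinj : Function.Injective (fun p : ℕ × ℕ => ((p.1, p.1 + 2 * p.2) : ℕ × ℕ)) := by
    rintro ⟨a, b⟩ ⟨c, d⟩ h
    simp only [Prod.mk.injEq] at h ⊢
    omega
  rw [← hinj.hasSum_iff]
  · have h := (hasSum_pow_mul_add (w ^ 2) s (by positivity) (by nlinarith)).sub
      (hasSum_ite_eq ((0, 0) : ℕ × ℕ) s)
    refine h.congr_fun ?_
    rintro ⟨i, k⟩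
    have he : Even (i + (i + 2 * k)) := ⟨i + k, by ring⟩
    simp only [Function.comp_apply, Prod.mk.injEq, he, true_and]
    by_cases h0 : i = 0 ∧ k = 0
    · obtain ⟨rfl, rfl⟩ := h0
      simp
    · rw [if_pos (by omega), if_neg h0, ← pow_mul, sub_zero]
      congr 2
      ring
  · rintro ⟨a, b⟩ hp
    refine if_neg fun ⟨⟨c, hc⟩, _, hab⟩ => hp ⟨(a, c - a), ?_⟩
    simp only [Prod.mk.injEq, true_and] at hc hab ⊢
    omega

/-- The half `ℓ ≥ r + 2`, parametrised by `(i, k) ↦ (i + 2k + 2, i)`. -/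
theorem hasSum_high (w s : ℝ) (hw0 : 0 < w) (hw1 : w < 1) :
    HasSum (fun p : ℕ × ℕ => if Even (p.1 + p.2) ∧ 2 ≤ p.1 + p.2 ∧ p.2 + 2 ≤ p.1 then
        w ^ (p.1 + p.2) * ((p.2 : ℝ) + 1 + s) else 0)
      (w ^ 2 * ((w ^ 2 / (1 - w ^ 2) ^ 2 + (1 + s) * (1 - w ^ 2)⁻¹) * (1 - w ^ 2)⁻¹)) := by
  have hinj : Function.Injective (fun p : ℕ × ℕ => ((p.1 + 2 * p.2 + 2, p.1) : ℕ × ℕ)) := by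
    rintro ⟨a, b⟩ ⟨c, d⟩ h
    simp only [Prod.mk.injEq] at h ⊢
    omega
  rw [← hinj.hasSum_iff]
  · have h := (hasSum_pow_mul_add (w ^ 2) (1 + s) (by positivity) (by nlinarith)).mul_left (w ^ 2)
    refine h.congr_fun ?_
    rintro ⟨i, k⟩
    have he : Even (i + 2 * k + 2 + i) := ⟨i + k + 1, by ring⟩
    simp only [Function.comp_apply, he, true_and]
    rw [if_pos (by omega)]
    ring
  · rintro ⟨a, b⟩ hp
    refine if_neg fun ⟨⟨c, hc⟩, _, hab⟩ => hp ⟨(b, c - b - 1), ?_⟩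
    simp only [Prod.mk.injEq, and_true] at hc hab ⊢
    omega


/-- The linear system for the expected distances `x = E[L]`, `y = E[R]` from the two
root-edge endpoints to the pointed vertex in a Boltzmann-distributed pointed
non-separable bipartite outerplanar map has solution
`x = (2w⁹ + 2w⁸ - 6w⁷ - 8w⁶ + 5w⁵ + 7w⁴ - w³ - 4w² + 1)/(4w⁸ - 16w⁶ + 19w⁴ - 8w² + 1)`. -/
theorem bipartite_stretch_factor_system
    (w : ℝ) (hw0 : 0 < w) (hw1 : w < 1)
    (hden : 4 * w ^ 8 - 16 * w ^ 6 + 19 * w ^ 4 - 8 * w ^ 2 + 1 ≠ 0)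
    (x y : ℝ)
    (hx : x = (∑' p : ℕ × ℕ,
        if Even (p.1 + p.2) ∧ 2 ≤ p.1 + p.2 then
          w ^ (p.1 + p.2) *
            ((if p.1 ≤ p.2 then (p.1 : ℝ) + x else 0) +
             (if p.2 + 2 ≤ p.1 then (p.2 : ℝ) + 1 + y else 0))
        else 0) + (1 - w ^ 2 - w ^ 3) / (1 - w ^ 2))
    (hy : y = ∑' p : ℕ × ℕ,
        if Even (p.1 + p.2) ∧ 2 ≤ p.1 + p.2 then
          w ^ (p.1 + p.2) *
            ((if p.1 + 2 ≤ p.2 then (p.1 : ℝ) + 1 + x else 0) +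
             (if p.2 ≤ p.1 then (p.2 : ℝ) + y else 0))
        else 0) :
    x = (2 * w ^ 9 + 2 * w ^ 8 - 6 * w ^ 7 - 8 * w ^ 6 + 5 * w ^ 5 + 7 * w ^ 4
          - w ^ 3 - 4 * w ^ 2 + 1) /
        (4 * w ^ 8 - 16 * w ^ 6 + 19 * w ^ 4 - 8 * w ^ 2 + 1) := by
  have hX := ((hasSum_low w x hw0 hw1).add (hasSum_high w y hw0 hw1)).tsum_eq
  -- Swapping `ℓ` and `r` turns the series for `y` into the one for `x` with `x`, `y` exchanged.
  have hY := (((Equiv.prodComm ℕ ℕ).hasSum_iff.mpr (hasSum_high w x hw0 hw1)).add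
    ((Equiv.prodComm ℕ ℕ).hasSum_iff.mpr (hasSum_low w y hw0 hw1))).tsum_eq
  have ex : x = ((w ^ 2 / (1 - w ^ 2) ^ 2 + x * (1 - w ^ 2)⁻¹) * (1 - w ^ 2)⁻¹ - x)
      + (w ^ 2 * ((w ^ 2 / (1 - w ^ 2) ^ 2 + (1 + y) * (1 - w ^ 2)⁻¹) * (1 - w ^ 2)⁻¹))
      + (1 - w ^ 2 - w ^ 3) / (1 - w ^ 2) := by
    rw [← hX]
    refine hx.trans ?_
    congr 1
    refine tsum_congr fun p => ?_
    split_ifs <;> first | (exfalso; tauto) | ring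
  have ey : y = (w ^ 2 * ((w ^ 2 / (1 - w ^ 2) ^ 2 + (1 + x) * (1 - w ^ 2)⁻¹) * (1 - w ^ 2)⁻¹))
      + ((w ^ 2 / (1 - w ^ 2) ^ 2 + y * (1 - w ^ 2)⁻¹) * (1 - w ^ 2)⁻¹ - y) := by
    rw [← hY]
    refine hy.trans ?_
    refine tsum_congr fun p => ?_
    simp only [Function.comp_apply, Equiv.prodComm_apply, Prod.fst_swap, Prod.snd_swap,
      add_comm p.2 p.1]
    split_ifs <;> first | (exfalso; tauto) | ring
  have hd : 1 - w ^ 2 ≠ 0 := by nlinarith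
  clear hX hY hx hy
  -- The two equations multiplied by `(1 - w²)³`.
  have ex' : x * ((1 - w ^ 2) * (1 - 4 * w ^ 2 + 2 * w ^ 4)) - y * (w ^ 2 * (1 - w ^ 2))
      = 2 * w ^ 2 + (1 - w ^ 2 - w ^ 3) * (1 - w ^ 2) ^ 2 := by
    field_simp at ex
    linear_combination ex
  have ey' : y * ((1 - w ^ 2) * (1 - 4 * w ^ 2 + 2 * w ^ 4)) - x * (w ^ 2 * (1 - w ^ 2))
      = 2 * w ^ 2 := by
    field_simp at ey
    linear_combination ey
  rw [eq_div_iff hden]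
  apply mul_left_cancel₀ hd
  -- Cramer's rule: eliminate `y`.
  linear_combination (1 - 4 * w ^ 2 + 2 * w ^ 4) * ex' + w ^ 2 * ey'
end
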